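/- Let x₀ ∈ 𝕋², r₀ > 0, M̄ > 1, and let 𝔟 ∈ C¹(𝕋²; ℝ) satisfy the bending condition. There exist c₀ > 0 and m̲ > 0 (depending on 𝔟, x₀, r₀), and T > 0 and κ > 0 (depending on 𝔟, x₀, r₀, M̄), such that for every speed of light c ≥ c₀ and every force F ∈ L^∞(0,T; W^{1,∞}(𝕋²×ℝ²; ℝ²)) with ‖F‖_{L^∞} ≤ κ, the relativistic characteristics (X̄, V̄) associated with the force v̂⊥𝔟(x) + F satisfy: for every x ∈ 𝕋² and every v ∈ ℝ² with m̲ ≤ |v| ≤ M̄, there exists t ∈ (T/4, 3T/4) with X̄(t,0,x,v) ∈ B(x₀, r₀/2), and moreover |v|/2 ≤ |V̄(s,0,x,v)| ≤ 2|v| for all s ∈ [0,T]. -/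

import Mathlib

noncomputable section

open MeasureTheory Real

/-- Points of the plane; the torus `𝕋²` is represented via `ℤ²`-periodic objects on `ℝ²`. -/
abbrev V2 := ℝ × ℝ

/-- `v ↦ v⊥ = (v₂, -v₁)`. -/
def pperp (v : V2) : V2 := (v.2, -v.1)

/-- Euclidean norm on `ℝ²`. -/
noncomputable def en (v : V2) : ℝ := Real.sqrt (v.1 ^ 2 + v.2 ^ 2)

/-- Relativistic velocity `v̂ = v/√(1+|v|²/c²)` for speed of light `c`. -/
noncomputable def vhat (c : ℝ) (v : V2) : V2 :=
  (1 / Real.sqrt (1 + (v.1 ^ 2 + v.2 ^ 2) / c ^ 2)) • v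

/-- `ℤ²`-periodicity of a function on `ℝ²` (i.e. the function lives on the torus `𝕋²`). -/
def Zper {α : Type*} (g : V2 → α) : Prop :=
  ∀ (x : V2) (m n : ℤ), g (x.1 + (m : ℝ), x.2 + (n : ℝ)) = g x

/-- A fundamental domain for the torus. -/
def unitSq : Set V2 := Set.Icc ((0 : ℝ), (0 : ℝ)) ((1 : ℝ), (1 : ℝ))

/-- Integral over the torus of a (periodic) function. -/
noncomputable def intT2 (g : V2 → ℝ) : ℝ := ∫ x in unitSq, g x

/-- Integral over `𝕋² × ℝ²`. -/
noncomputable def intT2R2 (g : V2 → V2 → ℝ) : ℝ := ∫ x in unitSq, ∫ v : V2, g x v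

/-- Spatial divergence of a vector field on `ℝ²`. -/
noncomputable def divF (E : V2 → V2) (x : V2) : ℝ :=
  fderiv ℝ (fun y => (E y).1) x ((1 : ℝ), (0 : ℝ)) +
    fderiv ℝ (fun y => (E y).2) x ((0 : ℝ), (1 : ℝ))

/-- Geometric control condition for a (periodic) set `ω ⊆ 𝕋²`. -/
def GCC (ω : Set V2) : Prop :=
  ∀ x e : V2, en e = 1 → ∃ y : ℝ, 0 ≤ y ∧ x + y • e ∈ ω

/-- Open ball of the torus, of center `x₀` and radius `r` (as a periodic subset of `ℝ²`). -/
def ballT2 (x₀ : V2) (r : ℝ) : Set V2 :=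
  {x : V2 | ∃ m n : ℤ, en (x.1 - (x₀.1 + (m : ℝ)), x.2 - (x₀.2 + (n : ℝ))) < r}

/-- The full preimage in `ℝ²` of the image in `𝕋²` of the line through `p` directed by `d`. -/
def periodizedLine (p d : V2) : Set V2 :=
  {x : V2 | ∃ (t : ℝ) (m n : ℤ), x = p + t • d + ((m : ℝ), (n : ℝ))}

/-- The strip assumption: `ω` contains the image of a straight line of `ℝ²`
which is closed in the torus. -/
def StripAssumption (ω : Set V2) : Prop :=
  ∃ p d : V2, d ≠ 0 ∧ IsClosed (periodizedLine p d) ∧ periodizedLine p d ⊆ ω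

/-- All iterated derivatives of order at most `k` are bounded by `κ` in sup norm. -/
def DerivBound {E F : Type*} [NormedAddCommGroup E] [NormedSpace ℝ E]
    [NormedAddCommGroup F] [NormedSpace ℝ F] (k : ℕ) (κ : ℝ) (g : E → F) : Prop :=
  ∀ i : ℕ, i ≤ k → ∀ p, ‖iteratedFDeriv ℝ i g p‖ ≤ κ

/-- Relativistic characteristics for the force field `Force`, with speed of light `c`,
starting from `(x,v)` at time `s`. -/
def IsRelChar (c : ℝ) (Force : ℝ → V2 → V2 → V2) (s : ℝ) (x v : V2)
    (X V : ℝ → V2) : Prop :=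
  X s = x ∧ V s = v ∧
    ∀ t : ℝ, HasDerivAt X (vhat c (V t)) t ∧ HasDerivAt V (Force t (X t) (V t)) t

/-- `(F, E, b)` is a classical, `𝕋²`-periodic solution on `[0,T]` of the 2D relativistic
Vlasov–Maxwell system with speed of light `c` and source `S`. -/
def IsVMSolution (c T : ℝ) (F : ℝ × V2 × V2 → ℝ) (E : ℝ × V2 → V2)
    (b : ℝ × V2 → ℝ) (S : ℝ × V2 × V2 → ℝ) : Prop :=
  ContDiff ℝ 1 F ∧ ContDiff ℝ 1 E ∧ ContDiff ℝ 1 b ∧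
  (∀ t v, Zper fun x => F (t, x, v)) ∧ (∀ t, Zper fun x => E (t, x)) ∧
  (∀ t, Zper fun x => b (t, x)) ∧
  ∀ t ∈ Set.Icc (0 : ℝ) T, ∀ x v : V2,
    -- Vlasov equation: ∂ₜf + v̂·∇ₓf + (E + c⁻¹ v̂⊥ b)·∇ᵥf = S
    (fderiv ℝ F (t, x, v)
        ((1 : ℝ), vhat c v, E (t, x) + (c⁻¹ * b (t, x)) • pperp (vhat c v))
      = S (t, x, v)) ∧
    -- ∂ₜE₁ − c ∂_{x₂} b = −∫ f v̂₁ dv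
    (fderiv ℝ (fun p => (E p).1) (t, x) ((1 : ℝ), ((0 : ℝ), (0 : ℝ)))
        - c * fderiv ℝ b (t, x) ((0 : ℝ), ((0 : ℝ), (1 : ℝ)))
      = -∫ w : V2, F (t, x, w) * (vhat c w).1) ∧
    -- ∂ₜE₂ + c ∂_{x₁} b = −∫ f v̂₂ dv
    (fderiv ℝ (fun p => (E p).2) (t, x) ((1 : ℝ), ((0 : ℝ), (0 : ℝ)))
        + c * fderiv ℝ b (t, x) ((0 : ℝ), ((1 : ℝ), (0 : ℝ)))
      = -∫ w : V2, F (t, x, w) * (vhat c w).2) ∧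
    -- ∂ₜb + c (∂_{x₁}E₂ − ∂_{x₂}E₁) = 0
    (fderiv ℝ b (t, x) ((1 : ℝ), ((0 : ℝ), (0 : ℝ)))
        + c * (fderiv ℝ (fun p => (E p).2) (t, x) ((0 : ℝ), ((1 : ℝ), (0 : ℝ)))
            - fderiv ℝ (fun p => (E p).1) (t, x) ((0 : ℝ), ((0 : ℝ), (1 : ℝ)))) = 0) ∧
    -- Gauss law: ∂_{x₁}E₁ + ∂_{x₂}E₂ = ∫ f dv − ∫∫ f dv dx
    (fderiv ℝ (fun p => (E p).1) (t, x) ((0 : ℝ), ((1 : ℝ), (0 : ℝ)))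
        + fderiv ℝ (fun p => (E p).2) (t, x) ((0 : ℝ), ((0 : ℝ), (1 : ℝ)))
      = (∫ w : V2, F (t, x, w)) - intT2R2 fun y w => F (t, y, w))


/-- The `r`-thickening `K_r` of a (periodic) set `K ⊆ 𝕋²`, for the torus distance. -/
def Kthick (K : Set V2) (r : ℝ) : Set V2 :=
  {x : V2 | ∃ y ∈ K, ∃ m n : ℤ, en (x.1 - y.1 - (m : ℝ), x.2 - y.2 - (n : ℝ)) ≤ r}

/-- One-sided bending condition for a magnetic field on the torus. -/
def BendingOne (𝔟 : V2 → ℝ) : Prop :=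
  ∃ (K : Set V2) (b d D bt : ℝ),
    IsClosed K ∧ Zper (fun x => x ∈ K) ∧
    0 < b ∧ 0 < d ∧ 0 < D ∧ bt ≤ 0 ∧
    -- (1) 𝔟 ≥ b̲ on K_{2d}
    (∀ x ∈ Kthick K (2 * d), b ≤ 𝔟 x) ∧
    -- (2) thickened geometric control condition for K
    (∀ x e : V2, en e = 1 → ∃ t ∈ Set.Icc (0 : ℝ) D,
      ∀ s ∈ Set.Icc t (t + d / 2), x + s • e ∈ Kthick K d) ∧
    -- (3) global lower bound 𝔟 ≥ b̃
    (∀ x, bt ≤ 𝔟 x) ∧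
    -- (4) b̃·D + b̲·d/2 > 0
    0 < bt * D + b * d / 2

/-- The bending condition: `𝔟` or `−𝔟` satisfies the one-sided bending condition. -/
def Bending (𝔟 : V2 → ℝ) : Prop := BendingOne 𝔟 ∨ BendingOne fun x => -𝔟 x

open Complex in
/-- A curve with nearly unit speed and slowly rotating direction stays close to its tangent. -/
lemma norm_sub_tangent_le {X : ℝ → ℂ} {dX : ℝ → ℂ} {ψ dψ : ℝ → ℝ} {e₀ : ℂ} {σ ω ε A ℓ : ℝ}
    (he₀ : ‖e₀‖ = 1) (hσ : |σ| = 1)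
    (hX : ∀ s, HasDerivAt X (dX s) s) (hψ : ∀ s, HasDerivAt ψ (dψ s) s)
    (hdX : ∀ s ∈ Set.Icc 0 A, ‖dX s - e₀ * Complex.exp ((-(σ * ψ s) : ℝ) * I)‖ ≤ ε)
    (hdψ : ∀ s ∈ Set.Icc 0 A, |dψ s| ≤ ω)
    {s₀ s : ℝ} (hs₀ : 0 ≤ s₀) (hs : s₀ ≤ s) (hsℓ : s ≤ s₀ + ℓ) (hsA : s ≤ A) :
    ‖X s - (X s₀ + (s - s₀) • (e₀ * Complex.exp ((-(σ * ψ s₀) : ℝ) * I)))‖ ≤ (ω * ℓ + ε) * ℓ := by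
  have hω : 0 ≤ ω := (abs_nonneg _).trans (hdψ s₀ ⟨hs₀, hs.trans hsA⟩)
  have hε : 0 ≤ ε := (norm_nonneg _).trans (hdX s₀ ⟨hs₀, hs.trans hsA⟩)
  have hℓ : 0 ≤ ℓ := by linarith
  have hsub : Set.Icc s₀ s ⊆ Set.Icc 0 A := Set.Icc_subset_Icc hs₀ hsA
  have hturn : ∀ r ∈ Set.Icc s₀ s, |ψ r - ψ s₀| ≤ ω * ℓ := by
    intro r hr
    have h := (convex_Icc s₀ s).norm_image_sub_le_of_norm_hasDerivWithin_le (f := ψ) (f' := dψ)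
      (C := ω) (fun x _ => (hψ x).hasDerivWithinAt) (fun x hx => hdψ x (hsub hx))
      (Set.left_mem_Icc.2 hs) hr
    rw [Real.norm_eq_abs, Real.norm_eq_abs, abs_of_nonneg (sub_nonneg.2 hr.1)] at h
    exact h.trans (mul_le_mul_of_nonneg_left (by linarith [hr.2]) hω)
  have hdir : ∀ r ∈ Set.Icc s₀ s,
      ‖e₀ * Complex.exp ((-(σ * ψ r) : ℝ) * I) -
        e₀ * Complex.exp ((-(σ * ψ s₀) : ℝ) * I)‖ ≤ ω * ℓ := by
    intro r hr
    have h1 : e₀ * Complex.exp ((-(σ * ψ r) : ℝ) * I) - e₀ * Complex.exp ((-(σ * ψ s₀) : ℝ) * I)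
        = e₀ * Complex.exp ((-(σ * ψ s₀) : ℝ) * I) *
          (Complex.exp (I * (-(σ * (ψ r - ψ s₀)) : ℝ)) - 1) := by
      rw [mul_sub, mul_one, mul_assoc, ← Complex.exp_add]
      congr 3
      push_cast
      ring
    rw [h1, norm_mul, norm_mul, he₀, norm_exp_ofReal_mul_I, one_mul, one_mul]
    refine (Real.norm_exp_I_mul_ofReal_sub_one_le).trans ?_
    rw [norm_neg, Real.norm_eq_abs, abs_mul, hσ, one_mul]
    exact hturn r hr
  have h := (convex_Icc s₀ s).norm_image_sub_le_of_norm_hasDerivWithin_le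
    (f := fun r => X r - (r - s₀) • (e₀ * Complex.exp ((-(σ * ψ s₀) : ℝ) * I)))
    (f' := fun r => dX r - (1 : ℝ) • (e₀ * Complex.exp ((-(σ * ψ s₀) : ℝ) * I)))
    (C := ω * ℓ + ε)
    (fun x _ => ((hX x).sub (((hasDerivAt_id x).sub_const s₀).smul_const _)).hasDerivWithinAt)
    (fun x hx => by
      rw [one_smul, add_comm]
      refine le_trans ?_ (add_le_add (hdX x (hsub hx)) (hdir x hx))
      refine le_trans (le_of_eq ?_) (norm_add_le _ _)
      congr 1
      ring)
    (Set.left_mem_Icc.2 hs) (Set.right_mem_Icc.2 hs)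
  simp only [sub_self, zero_smul, sub_zero, Real.norm_eq_abs] at h
  rw [abs_of_nonneg (sub_nonneg.2 hs)] at h
  calc _ = ‖X s - (s - s₀) • (e₀ * Complex.exp ((-(σ * ψ s₀) : ℝ) * I)) - X s₀‖ := by
        congr 1; ring
    _ ≤ _ := h.trans (mul_le_mul_of_nonneg_left (by linarith) (by positivity))

/-- Growth of a function from a lower bound on its derivative. -/
lemma mul_sub_le_of_le_hasDerivAt {ψ dψ : ℝ → ℝ} (hψ : ∀ s, HasDerivAt ψ (dψ s) s) {C s t : ℝ}
    (hst : s ≤ t) (h : ∀ r ∈ Set.Icc s t, C ≤ dψ r) : C * (t - s) ≤ ψ t - ψ s :=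
  (convex_Icc s t).mul_sub_le_image_sub_of_le_deriv
    (fun x _ => (hψ x).continuousAt.continuousWithinAt)
    (fun x _ => (hψ x).differentiableAt.differentiableWithinAt)
    (fun x hx => by rw [(hψ x).deriv]; exact h x (interior_subset hx))
    s (Set.left_mem_Icc.2 hst) t (Set.right_mem_Icc.2 hst) hst

open Complex in
/-- Every unit vector is reached by rotating a given one by an angle in a prescribed period. -/
lemma exists_angle_mem_Icc {e₀ e : ℂ} (he₀ : ‖e₀‖ = 1) (he : ‖e‖ = 1) {σ : ℝ} (hσ : |σ| = 1)
    (a : ℝ) : ∃ α ∈ Set.Icc a (a + 2 * π), e₀ * Complex.exp ((-(σ * α) : ℝ) * I) = e := by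
  set θ : ℝ := -(σ * arg (e / e₀)) with hθ
  refine ⟨toIcoMod Real.two_pi_pos a θ, Set.Ico_subset_Icc_self (toIcoMod_mem_Ico _ _ _), ?_⟩
  have h0 : e₀ ≠ 0 := by rw [← norm_pos_iff, he₀]; exact one_pos
  have h1 : Complex.exp (arg (e / e₀) * I) = e / e₀ := by
    have := norm_mul_exp_arg_mul_I (e / e₀)
    rwa [norm_div, he, he₀, div_one, ofReal_one, one_mul] at this
  have h2 : Complex.exp ((-(σ * toIcoMod Real.two_pi_pos a θ) : ℝ) * I) =
      Complex.exp (arg (e / e₀) * I) := by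
    rw [exp_eq_exp_iff_exists_int]
    have hm : toIcoMod Real.two_pi_pos a θ = θ - toIcoDiv Real.two_pi_pos a θ * (2 * π) := by
      rw [toIcoMod, zsmul_eq_mul]
    rcases eq_or_eq_neg_of_abs_eq hσ with h | h
    · refine ⟨toIcoDiv Real.two_pi_pos a θ, ?_⟩
      rw [hm, hθ, h]
      push_cast
      ring
    · refine ⟨-toIcoDiv Real.two_pi_pos a θ, ?_⟩
      rw [hm, hθ, h]
      push_cast
      ring
  rw [h2, h1, mul_div_cancel₀ _ h0]

set_option maxHeartbeats 1000000 in
open Complex in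
/-- Core bending argument in arc length: a curve whose direction angle turns at rate `β / R`
up to an error `ε` eventually takes every direction, hence follows one along which
straight lines reach `U`. -/
lemma bending_core {β : ℂ → ℝ} {B b d D bt L r : ℝ} {K U : Set ℂ} {e : ℂ}
    (hB : ∀ z, |β z| ≤ B) (hd : 0 < d) (hD : 0 < D) (hbt : bt ≤ 0)
    (hK : ∀ z ∈ K, ∀ y, ‖y - z‖ ≤ d → b ≤ β y)
    (hgcc : ∀ x u : ℂ, ‖u‖ = 1 → ∃ t ∈ Set.Icc (0 : ℝ) D,
      ∀ s ∈ Set.Icc t (t + d / 2), x + s • u ∈ K)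
    (hbtβ : ∀ z, bt ≤ β z) (hδ : 0 < bt * D + b * d / 2)
    (hr : 0 < r) (he : ‖e‖ = 1)
    (hU : ∀ x : ℂ, ∃ l ∈ Set.Icc (0 : ℝ) L, ∀ y, ‖y - (x + l • e)‖ ≤ r → y ∈ U) :
    ∃ m > (0 : ℝ), ∀ Mb > (0 : ℝ), ∃ A > (0 : ℝ), ∃ ε > (0 : ℝ), ∀ R, m ≤ R → R ≤ Mb →
      ∀ (σ : ℝ) (e₀ : ℂ) (X dX : ℝ → ℂ) (ψ dψ : ℝ → ℝ), |σ| = 1 → ‖e₀‖ = 1 →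
        (∀ s, HasDerivAt X (dX s) s) → (∀ s, HasDerivAt ψ (dψ s) s) →
        (∀ s ∈ Set.Icc 0 A, ‖dX s - e₀ * Complex.exp ((-(σ * ψ s) : ℝ) * I)‖ ≤ ε) →
        (∀ s ∈ Set.Icc 0 A, |dψ s - β (X s) / R| ≤ ε) →
        ∃ s ∈ Set.Icc 0 A, X s ∈ U := by
  have hL : 0 ≤ L := by
    obtain ⟨l, hl, -⟩ := hU 0
    exact hl.1.trans hl.2
  have hB0 : 0 ≤ B := (abs_nonneg _).trans (hB 0)
  set ℓ := D + d / 2 with hℓ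
  have hℓ0 : 0 < ℓ := by positivity
  set δ := bt * D + b * d / 2 with hδdef
  -- lower bound for the radius of curvature
  refine ⟨(2 * B * ℓ ^ 2 + 1) / d + (2 * B * L ^ 2 + 1) / r, by positivity, fun Mb hMb => ?_⟩
  obtain ⟨N, hN⟩ := exists_nat_ge (2 * π / (δ / (2 * Mb)))
  refine ⟨N * ℓ + L + 1, by positivity,
    min (δ / (2 * Mb * ℓ)) (min (d / (2 * (ℓ ^ 2 + ℓ))) (r / (2 * (L ^ 2 + L + 1)))),
    by positivity, ?_⟩
  set ε := min (δ / (2 * Mb * ℓ)) (min (d / (2 * (ℓ ^ 2 + ℓ))) (r / (2 * (L ^ 2 + L + 1))))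
    with hεdef
  have hε0 : 0 < ε := by positivity
  have hε1 : ε * ℓ ≤ δ / (2 * Mb) := by
    have : ε ≤ δ / (2 * Mb * ℓ) := min_le_left _ _
    calc ε * ℓ ≤ δ / (2 * Mb * ℓ) * ℓ := mul_le_mul_of_nonneg_right this hℓ0.le
      _ = δ / (2 * Mb) := by field_simp
  have hε2 : ε * (ℓ ^ 2 + ℓ) ≤ d / 2 := by
    have : ε ≤ d / (2 * (ℓ ^ 2 + ℓ)) := (min_le_right _ _).trans (min_le_left _ _)
    rw [le_div_iff₀ (by positivity)] at this
    linarith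
  have hε3 : ε * (L ^ 2 + L) ≤ r / 2 := by
    have : ε ≤ r / (2 * (L ^ 2 + L + 1)) := (min_le_right _ _).trans (min_le_right _ _)
    rw [le_div_iff₀ (by positivity)] at this
    linarith
  intro R hmR hRM σ e₀ X dX ψ dψ hσ he₀ hX hψ hdX hdψ
  set A := (N : ℝ) * ℓ + L + 1
  have hm1 : (2 * B * ℓ ^ 2 + 1) / d ≤ R := le_trans (le_add_of_nonneg_right (by positivity)) hmR
  have hm2 : (2 * B * L ^ 2 + 1) / r ≤ R := le_trans (le_add_of_nonneg_left (by positivity)) hmR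
  have hR : 0 < R := lt_of_lt_of_le (by positivity) hm1
  have hcurv1 : B / R * ℓ ^ 2 ≤ d / 2 := by
    rw [div_le_iff₀ hd] at hm1
    rw [div_mul_eq_mul_div, div_le_iff₀ hR]
    linarith
  have hcurv2 : B / R * L ^ 2 ≤ r / 2 := by
    rw [div_le_iff₀ hr] at hm2
    rw [div_mul_eq_mul_div, div_le_iff₀ hR]
    linarith
  have hω : ∀ s ∈ Set.Icc 0 A, |dψ s| ≤ B / R + ε := by
    intro s hs
    have h1 := hdψ s hs
    have h2 : |β (X s) / R| ≤ B / R := by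
      rw [abs_div, abs_of_pos hR]
      exact div_le_div_of_nonneg_right (hB _) hR.le
    calc |dψ s| = |(dψ s - β (X s) / R) + β (X s) / R| := by ring_nf
      _ ≤ _ := (abs_add_le _ _).trans (by linarith)
  have hunit : ∀ s, ‖e₀ * Complex.exp ((-(σ * ψ s) : ℝ) * I)‖ = 1 := fun s => by
    rw [norm_mul, he₀, norm_exp_ofReal_mul_I, one_mul]
  have hstep : ∀ s₀, 0 ≤ s₀ → s₀ + ℓ ≤ A →
      ∃ s₁ ∈ Set.Icc s₀ (s₀ + ℓ), ψ s₀ + δ / (2 * Mb) ≤ ψ s₁ := by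
    intro s₀ hs₀ hs₀A
    obtain ⟨t, ht, htK⟩ := hgcc (X s₀) _ (hunit s₀)
    have h1 : (bt / R - ε) * (s₀ + t - s₀) ≤ ψ (s₀ + t) - ψ s₀ := by
      refine mul_sub_le_of_le_hasDerivAt hψ (by linarith [ht.1]) fun s hs => ?_
      have h := (abs_le.1 (hdψ s ⟨by linarith [hs.1], by linarith [hs.2, ht.2]⟩)).1
      have := div_le_div_of_nonneg_right (hbtβ (X s)) hR.le
      linarith
    have h2 : (b / R - ε) * (s₀ + t + d / 2 - (s₀ + t)) ≤ ψ (s₀ + t + d / 2) - ψ (s₀ + t) := by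
      refine mul_sub_le_of_le_hasDerivAt hψ (by linarith) fun s hs => ?_
      have hsA : s ≤ A := by linarith [hs.2, ht.2]
      have h := (abs_le.1 (hdψ s ⟨by linarith [hs.1, ht.1], hsA⟩)).1
      have htan := norm_sub_tangent_le (ℓ := ℓ) he₀ hσ hX hψ hdX hω hs₀
        (by linarith [hs.1, ht.1]) (by linarith [hs.2, ht.2]) hsA
      have hb : b ≤ β (X s) :=
        hK _ (htK (s - s₀) ⟨by linarith [hs.1], by linarith [hs.2]⟩) _ (htan.trans (by nlinarith))
      have := div_le_div_of_nonneg_right hb hR.le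
      linarith
    refine ⟨s₀ + t + d / 2, ⟨by linarith [ht.1], by linarith [ht.2]⟩, ?_⟩
    have h3 : δ / Mb ≤ δ / R := div_le_div_of_nonneg_left hδ.le hR hRM
    have h4 : δ / R ≤ bt / R * t + b / R * (d / 2) := by
      have : bt * D ≤ bt * t := mul_le_mul_of_nonpos_left ht.2 hbt
      calc δ / R ≤ (bt * t + b * d / 2) / R := div_le_div_of_nonneg_right (by linarith) hR.le
        _ = _ := by ring
    have h5 : ε * (t + d / 2) ≤ ε * ℓ := mul_le_mul_of_nonneg_left (by linarith [ht.2]) hε0.le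
    have h6 : δ / Mb = 2 * (δ / (2 * Mb)) := by field_simp
    nlinarith
  have hiter : ∀ n : ℕ, n ≤ N → ∃ s ∈ Set.Icc 0 (n * ℓ), ψ 0 + n * (δ / (2 * Mb)) ≤ ψ s := by
    intro n
    induction n with
    | zero => exact fun _ => ⟨0, by simp, by simp⟩
    | succ n ih =>
      intro hn
      obtain ⟨s, hs, hψs⟩ := ih (by omega)
      have hnN : ((n : ℝ) + 1) * ℓ ≤ N * ℓ :=
        mul_le_mul_of_nonneg_right (by exact_mod_cast hn) hℓ0.le
      obtain ⟨s₁, hs₁, h⟩ := hstep s hs.1 (by linarith [hs.2])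
      refine ⟨s₁, ⟨hs.1.trans hs₁.1, ?_⟩, ?_⟩
      · push_cast
        linarith [hs.2, hs₁.2]
      · push_cast
        linarith
  obtain ⟨sN, hsN, hψN⟩ := hiter N le_rfl
  have hfull : ψ 0 + 2 * π ≤ ψ sN := by
    rw [div_le_iff₀ (by positivity)] at hN
    linarith
  obtain ⟨α, hα, hαe⟩ := exists_angle_mem_Icc he₀ he hσ (ψ 0)
  obtain ⟨s, hs, hψs⟩ := intermediate_value_Icc hsN.1
    (fun x _ => (hψ x).continuousAt.continuousWithinAt) ⟨hα.1, hα.2.trans hfull⟩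
  obtain ⟨l, hl, hlU⟩ := hU (X s)
  have hslA : s + l ≤ A := by linarith [hs.2, hsN.2, hl.2]
  refine ⟨s + l, ⟨by linarith [hs.1, hl.1], hslA⟩, hlU _ ?_⟩
  have htan := norm_sub_tangent_le (ℓ := L) he₀ hσ hX hψ hdX hω hs.1
    (by linarith [hl.1]) (by linarith [hl.2]) hslA
  rw [hψs, hαe, add_sub_cancel_left] at htan
  exact htan.trans (by nlinarith)

/-- The identification of the plane `V2` with `ℂ`. -/
def toC (v : V2) : ℂ := ⟨v.1, v.2⟩

lemma norm_toC (v : V2) : ‖toC v‖ = en v := by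
  rw [Complex.norm_eq_sqrt_sq_add_sq, en, toC]

lemma hasDerivAt_toC {f : ℝ → V2} {f' : V2} {t : ℝ} (h : HasDerivAt f f' t) :
    HasDerivAt (fun s => toC (f s)) (toC f') t :=
  (Complex.equivRealProdCLM.symm : V2 →L[ℝ] ℂ).hasFDerivAt.comp_hasDerivAt t h

/-- A continuous function on the torus is bounded. -/
lemma exists_abs_le_of_Zper {g : V2 → ℝ} (hg : Continuous g) (hper : Zper g) :
    ∃ B : ℝ, ∀ x, |g x| ≤ B := by
  obtain ⟨B, hB⟩ := (isCompact_Icc : IsCompact unitSq).exists_bound_of_continuousOn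
    hg.continuousOn
  refine ⟨B, fun x => ?_⟩
  have h := hper (Int.fract x.1, Int.fract x.2) ⌊x.1⌋ ⌊x.2⌋
  simp only [Int.fract_add_floor] at h
  rw [show x = (x.1, x.2) from rfl, h]
  exact hB _ ⟨⟨Int.fract_nonneg _, Int.fract_nonneg _⟩,
    ⟨(Int.fract_lt_one _).le, (Int.fract_lt_one _).le⟩⟩

/-- For every `r > 0` there is a direction along which all line segments of a fixed
length meet every torus ball of radius `r`. -/
lemma exists_direction_meets_ball (x₀ : V2) {r : ℝ} (hr : 0 < r) :
    ∃ (e : ℂ) (L : ℝ), ‖e‖ = 1 ∧ ∀ x : ℂ, ∃ l ∈ Set.Icc (0 : ℝ) L,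
      ∀ y : ℂ, ‖y - (x + l • e)‖ ≤ r → (y.re, y.im) ∈ ballT2 x₀ (2 * r) := by
  obtain ⟨k, hk⟩ := exists_nat_gt (1 / r)
  have hk0 : (0 : ℝ) < k := lt_trans (by positivity) hk
  have hk1 : (1 : ℝ) ≤ k := by
    exact_mod_cast Nat.one_le_iff_ne_zero.2 (by rintro rfl; simp at hk0)
  have hkr : 1 / (k : ℝ) < r := by
    rw [div_lt_iff₀ hr] at hk
    rw [div_lt_iff₀ hk0]
    linarith
  set w : ℂ := ⟨1, k⟩ with hw
  have hw0 : 0 < ‖w‖ := by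
    rw [norm_pos_iff]
    intro h
    simpa [hw] using congrArg Complex.re h
  refine ⟨(‖w‖⁻¹ : ℝ) • w, 2 * ‖w‖, by
    rw [norm_smul, norm_inv, norm_norm, inv_mul_cancel₀ hw0.ne'], fun x => ?_⟩
  set M : ℤ := ⌈x.re - x₀.1⌉ + 1 with hM
  have hM1 : 1 ≤ x₀.1 + M - x.re := by
    rw [hM]; push_cast; linarith [Int.le_ceil (x.re - x₀.1)]
  have hM2 : x₀.1 + M - x.re < 2 := by
    rw [hM]; push_cast; linarith [Int.ceil_lt_add_one (x.re - x₀.1)]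
  set j : ℤ := ⌊k * (x₀.1 + M - x.re) - (x₀.2 - x.im)⌋ with hj
  have hj1 := Int.floor_le (k * (x₀.1 + M - x.re) - (x₀.2 - x.im))
  have hj2 := Int.lt_floor_add_one (k * (x₀.1 + M - x.re) - (x₀.2 - x.im))
  rw [← hj] at hj1 hj2
  set τ : ℝ := (x₀.2 - x.im + j) / k with hτ
  have hτk : k * τ = x₀.2 - x.im + j := by rw [hτ]; field_simp
  have hτ1 : τ ≤ x₀.1 + M - x.re := by
    rw [hτ, div_le_iff₀ hk0]; linarith
  have hτ2 : x₀.1 + M - x.re - τ < 1 / k := by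
    rw [lt_div_iff₀ hk0]; linarith
  have hk1' : 1 / (k : ℝ) ≤ 1 := by rw [div_le_one hk0]; exact hk1
  refine ⟨τ * ‖w‖, ⟨by
    have : 0 ≤ τ := by linarith
    positivity, mul_le_mul_of_nonneg_right (by linarith) hw0.le⟩, fun y hy => ⟨M, j, ?_⟩⟩
  rw [smul_smul, mul_assoc, mul_inv_cancel₀ hw0.ne', mul_one] at hy
  rw [← norm_toC]
  have hclose : ‖(x + τ • w) - (⟨x₀.1 + M, x₀.2 + j⟩ : ℂ)‖ < r := by
    have h : (x + τ • w) - (⟨x₀.1 + M, x₀.2 + j⟩ : ℂ) = ((x.re + τ - (x₀.1 + M) : ℝ) : ℂ) := by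
      apply Complex.ext
      · simp [hw]
      · simp [hw]
        linarith
    rw [h, Complex.norm_real, Real.norm_eq_abs, abs_lt]
    constructor <;> linarith
  have hsplit : toC (y.re - (x₀.1 + M), y.im - (x₀.2 + j))
      = (y - (x + τ • w)) + ((x + τ • w) - (⟨x₀.1 + M, x₀.2 + j⟩ : ℂ)) := by
    apply Complex.ext <;> simp [toC]
  dsimp only
  rw [hsplit]
  exact (norm_add_le _ _).trans_lt (by linarith)

/-- The inverse Lorentz factor is Lipschitz in the momentum. -/
lemma abs_inv_lorentz_sub_le {c : ℝ} (hc : 1 ≤ c) (p q : ℝ) :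
    |1 / √(1 + p ^ 2 / c ^ 2) - 1 / √(1 + q ^ 2 / c ^ 2)| ≤ |p - q| := by
  have hform : ∀ y : ℝ, √(1 + y ^ 2 / c ^ 2) = ‖(⟨1, y / c⟩ : ℂ)‖ := fun y => by
    rw [Complex.norm_eq_sqrt_sq_add_sq, one_pow, div_pow]
  have hone : ∀ y : ℝ, 1 ≤ √(1 + y ^ 2 / c ^ 2) := fun y => by
    rw [Real.one_le_sqrt]
    exact le_add_of_nonneg_right (by positivity)
  have hlip : |√(1 + q ^ 2 / c ^ 2) - √(1 + p ^ 2 / c ^ 2)| ≤ |p - q| := by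
    rw [hform, hform]
    refine (abs_norm_sub_norm_le _ _).trans ?_
    have h : (⟨1, q / c⟩ : ℂ) - ⟨1, p / c⟩ = ((q - p) / c : ℝ) * Complex.I := by
      apply Complex.ext <;> simp
      ring
    rw [h, norm_mul, Complex.norm_I, mul_one, Complex.norm_real, Real.norm_eq_abs, abs_div,
      abs_of_pos (by linarith : (0 : ℝ) < c), abs_sub_comm]
    exact div_le_self (abs_nonneg _) hc
  have hp := hone p
  have hq := hone q
  rw [div_sub_div _ _ (by positivity) (by positivity), one_mul, mul_one, abs_div,
    abs_of_pos (a := √(1 + p ^ 2 / c ^ 2) * √(1 + q ^ 2 / c ^ 2)) (by positivity)]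
  exact (div_le_self (abs_nonneg _) (by nlinarith)).trans hlip

open Complex in
/-- Along a characteristic, the momentum is the initial one rotated by the angle
accumulated from the magnetic field, up to the impulse of the perturbing force. -/
lemma exists_rotation_angle {c κ : ℝ} {𝔟 : V2 → ℝ} (h𝔟 : Continuous 𝔟)
    {Force : ℝ → V2 → V2 → V2} (hF : ∀ t x v, en (Force t x v) ≤ κ) {x v : V2} {X V : ℝ → V2}
    (h : IsRelChar c (fun t y w => 𝔟 y • pperp (vhat c w) + Force t y w) 0 x v X V) :
    ∃ Φ : ℝ → ℝ,
      (∀ t, HasDerivAt Φ (1 / √(1 + en (V t) ^ 2 / c ^ 2) * 𝔟 (X t)) t) ∧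
      ∀ t, 0 ≤ t → ‖toC (V t) - toC v * Complex.exp ((-Φ t : ℝ) * I)‖ ≤ κ * t := by
  obtain ⟨-, hV0, hXV⟩ := h
  have hXc : Continuous X := continuous_iff_continuousAt.2 fun t => (hXV t).1.continuousAt
  have hVc : Continuous V := continuous_iff_continuousAt.2 fun t => (hXV t).2.continuousAt
  have hen : Continuous en := by
    unfold en
    fun_prop
  set φ : ℝ → ℝ := fun t => 1 / √(1 + en (V t) ^ 2 / c ^ 2) * 𝔟 (X t) with hφ
  have hφc : Continuous φ := by
    refine Continuous.mul (Continuous.div continuous_const ?_ fun t => ?_) (h𝔟.comp hXc)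
    · have := hen.comp hVc
      exact (continuous_const.add ((this.pow 2).div_const _)).sqrt
    · positivity
  set Φ : ℝ → ℝ := fun t => ∫ s in (0 : ℝ)..t, φ s with hΦ
  have hΦd : ∀ t, HasDerivAt Φ (φ t) t := fun t =>
    hφc.integral_hasStrictDerivAt 0 t |>.hasDerivAt
  refine ⟨Φ, hΦd, fun t ht => ?_⟩
  have hW : ∀ s, HasDerivAt (fun s => toC (V s) * Complex.exp ((Φ s : ℝ) * I))
      (toC (Force s (X s) (V s)) * Complex.exp ((Φ s : ℝ) * I)) s := by
    intro s
    have h1 := (hasDerivAt_toC (hXV s).2).mul (((hΦd s).ofReal_comp.mul_const I).cexp)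
    refine h1.congr_deriv ?_
    have h2 : toC (𝔟 (X s) • pperp (vhat c (V s)) + Force s (X s) (V s))
        = -(I * φ s * toC (V s)) + toC (Force s (X s) (V s)) := by
      have h3 : en (V s) ^ 2 = (V s).1 ^ 2 + (V s).2 ^ 2 := Real.sq_sqrt (by positivity)
      apply Complex.ext <;> simp [toC, hφ, pperp, vhat, h3] <;> ring
    rw [h2]
    ring
  have h4 := (convex_Icc 0 t).norm_image_sub_le_of_norm_hasDerivWithin_le
    (C := κ) (fun s _ => (hW s).hasDerivWithinAt)
    (fun s _ => by
      rw [norm_mul, norm_exp_ofReal_mul_I, mul_one, norm_toC]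
      exact hF _ _ _)
    (Set.left_mem_Icc.2 ht) (Set.right_mem_Icc.2 ht)
  have hΦ0 : Φ 0 = 0 := by simp [hΦ]
  rw [hΦ0, hV0, ofReal_zero, zero_mul, Complex.exp_zero, mul_one, sub_zero, Real.norm_eq_abs,
    abs_of_nonneg ht] at h4
  have h5 : toC (V t) - toC v * Complex.exp ((-Φ t : ℝ) * I)
      = (toC (V t) * Complex.exp ((Φ t : ℝ) * I) - toC v) * Complex.exp ((-Φ t : ℝ) * I) := by
    rw [sub_mul, mul_assoc, ← Complex.exp_add]
    simp
  rw [h5, norm_mul, norm_exp_ofReal_mul_I, mul_one]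
  exact h4

lemma Kthick_of_norm_sub_le {K : Set V2} {d d' : ℝ} {y z : ℂ}
    (hz : (z.re, z.im) ∈ Kthick K d) (hy : ‖y - z‖ ≤ d') : (y.re, y.im) ∈ Kthick K (d' + d) := by
  obtain ⟨k, hk, m, n, h⟩ := hz
  refine ⟨k, hk, m, n, ?_⟩
  rw [← norm_toC] at h ⊢
  have hsplit : toC (y.re - k.1 - m, y.im - k.2 - n)
      = (y - z) + toC (z.re - k.1 - m, z.im - k.2 - n) := by
    apply Complex.ext <;> simp [toC] <;> ring
  dsimp only at h ⊢
  rw [hsplit]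
  exact (norm_add_le _ _).trans (add_le_add hy h)

open Complex in
/-- Bending lemma when `σ 𝔟` satisfies the one-sided bending condition, `σ = ±1`. -/
lemma bending_of_bendingOne
    (x₀ : V2) {r₀ : ℝ} (hr₀ : 0 < r₀) {𝔟 : V2 → ℝ} (h𝔟 : Continuous 𝔟) (h𝔟per : Zper 𝔟)
    {σ : ℝ} (hσ : |σ| = 1) (hbend : BendingOne fun x => σ * 𝔟 x) :
    ∃ c₀ > (0 : ℝ), ∃ m > (0 : ℝ), ∀ Mb : ℝ, 1 < Mb →
      ∃ T > (0 : ℝ), ∃ κ > (0 : ℝ),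
        ∀ c ≥ c₀, ∀ Force : ℝ → V2 → V2 → V2,
          (∀ t x v, en (Force t x v) ≤ κ) →
          ∀ x v : V2, m ≤ en v → en v ≤ Mb →
          ∀ X V : ℝ → V2,
            IsRelChar c (fun t y w => 𝔟 y • pperp (vhat c w) + Force t y w) 0 x v X V →
            (∃ t ∈ Set.Ioo (T / 4) (3 * T / 4), X t ∈ ballT2 x₀ (r₀ / 2)) ∧
            (∀ s ∈ Set.Icc (0 : ℝ) T,
              en v / 2 ≤ en (V s) ∧ en (V s) ≤ 2 * en v) := by
  obtain ⟨K, b, d, D, bt, -, -, -, hd, hD, hbt, hK, hgcc, hbtβ, hδ⟩ := hbend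
  obtain ⟨B, hB⟩ := exists_abs_le_of_Zper h𝔟 h𝔟per
  have hB0 : 0 ≤ B := (abs_nonneg _).trans (hB 0)
  obtain ⟨e, L, he, hU⟩ := exists_direction_meets_ball x₀ (r := r₀ / 4) (by positivity)
  obtain ⟨m, hm, hcore⟩ := bending_core (β := fun z => σ * 𝔟 (z.re, z.im)) (B := B) (b := b)
    (d := d) (D := D) (bt := bt) (L := L) (r := r₀ / 4)
    (K := {z | (z.re, z.im) ∈ Kthick K d}) (U := {z | (z.re, z.im) ∈ ballT2 x₀ (2 * (r₀ / 4))})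
    (e := e) (fun z => by rw [abs_mul, hσ, one_mul]; exact hB _) hd hD hbt
    (fun z hz y hy => hK _ (by rw [two_mul]; exact Kthick_of_norm_sub_le hz hy))
    (fun x u hu => hgcc (x.re, x.im) (u.re, u.im) (by rw [← norm_toC]; exact hu) |>.imp
      fun t ht => ⟨ht.1, fun s hs => by simpa using ht.2 s hs⟩)
    (fun z => hbtβ _) hδ (by positivity) he hU
  refine ⟨1, one_pos, m, hm, fun Mb hMb => ?_⟩
  obtain ⟨A, hA, ε, hε, hcore⟩ := hcore Mb (by linarith)
  set T := 4 * (A * (1 + Mb) / m + 2) with hT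
  have hT0 : 0 < T := by positivity
  set η := min (m / 2) (ε * (m / (1 + Mb)) / (1 + Mb + B)) with hη
  have hη0 : 0 < η := by positivity
  have hη1 : η ≤ m / 2 := min_le_left _ _
  have hη2 : η * (1 + Mb + B) ≤ ε * (m / (1 + Mb)) :=
    (le_div_iff₀ (by positivity)).1 (min_le_right _ _)
  refine ⟨T, hT0, η / T, by positivity, fun c hc Force hF x v hmv hvM X V hchar => ?_⟩
  have hc0 : 0 < c := lt_of_lt_of_le one_pos hc
  obtain ⟨Φ, hΦ, hVΦ⟩ := exists_rotation_angle h𝔟 hF hchar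
  set R := en v with hR
  have hR0 : 0 < R := hm.trans_le hmv
  have hVη : ∀ t ∈ Set.Icc 0 T, ‖toC (V t) - toC v * Complex.exp ((-Φ t : ℝ) * I)‖ ≤ η := by
    intro t ht
    refine (hVΦ t ht.1).trans ?_
    calc η / T * t ≤ η / T * T := mul_le_mul_of_nonneg_left ht.2 (by positivity)
      _ = η := by field_simp
  have hspeed : ∀ t ∈ Set.Icc 0 T, |en (V t) - R| ≤ η := by
    intro t ht
    refine le_trans ?_ (hVη t ht)
    refine le_trans (le_of_eq ?_) (abs_norm_sub_norm_le _ _)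
    rw [norm_mul, norm_exp_ofReal_mul_I, mul_one, norm_toC, norm_toC]
  refine ⟨?_, fun s hs => ?_⟩
  swap
  · have := abs_le.1 (hspeed s hs)
    constructor <;> linarith
  set g : ℝ → ℝ := fun t => 1 / √(1 + en (V t) ^ 2 / c ^ 2) with hg
  set g₀ : ℝ := 1 / √(1 + R ^ 2 / c ^ 2) with hg₀
  have hg₀0 : 0 < g₀ := by positivity
  have hgg₀ : ∀ t ∈ Set.Icc 0 T, |g t - g₀| ≤ η := fun t ht =>
    (abs_inv_lorentz_sub_le hc _ _).trans (hspeed t ht)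
  have hg1 : ∀ t, |g t| ≤ 1 := fun t => by
    rw [hg, abs_of_nonneg (by positivity)]
    refine div_le_one_of_le₀ ?_ (by positivity)
    rw [Real.one_le_sqrt]
    exact le_add_of_nonneg_right (by positivity)
  -- the unperturbed constant speed
  set u := g₀ * R with hu
  have hu0 : 0 < u := by positivity
  have hulow : m / (1 + Mb) ≤ u := by
    have h1 : √(1 + R ^ 2 / c ^ 2) ≤ 1 + Mb := by
      rw [Real.sqrt_le_left (by linarith)]
      have : R ^ 2 / c ^ 2 ≤ R ^ 2 := div_le_self (by positivity) (one_le_pow₀ hc)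
      nlinarith
    rw [hu, hg₀, one_div, ← div_eq_inv_mul]
    exact div_le_div₀ hR0.le hmv (by positivity) h1
  set τ : ℝ → ℝ := fun s => T / 4 + 1 + s / u with hτ
  have hτd : ∀ s, HasDerivAt τ (1 / u) s := fun s =>
    ((hasDerivAt_id s).div_const u).const_add (T / 4 + 1)
  have hτmem : ∀ s ∈ Set.Icc 0 A, τ s ∈ Set.Ioo (T / 4) (3 * T / 4) := by
    intro s hs
    have h1 : 0 ≤ s / u := div_nonneg hs.1 hu0.le
    have h2 : s / u ≤ A * (1 + Mb) / m := by
      rw [← div_div_eq_mul_div]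
      exact div_le_div₀ hA.le hs.2 (by positivity) hulow
    constructor
    · simp only [hτ]
      linarith
    · simp only [hτ]
      linarith
  have hτmem' : ∀ s ∈ Set.Icc 0 A, τ s ∈ Set.Icc 0 T := fun s hs =>
    ⟨by linarith [(hτmem s hs).1], by linarith [(hτmem s hs).2]⟩
  have hsmall : η * (1 + Mb + B) ≤ ε * u :=
    hη2.trans (mul_le_mul_of_nonneg_left hulow hε.le)
  have hσ2 : σ * σ = 1 := by rw [← abs_mul_abs_self, hσ, one_mul]
  obtain ⟨s, hs, hsU⟩ := hcore R hmv hvM σ (toC v / R) (fun s => toC (X (τ s)))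
    (fun s => (1 / u : ℝ) • ((g (τ s) : ℂ) * toC (V (τ s)))) (fun s => σ * Φ (τ s))
    (fun s => σ * (g (τ s) * 𝔟 (X (τ s)) * (1 / u))) hσ
    (by rw [norm_div, norm_toC, Complex.norm_real, Real.norm_eq_abs, abs_of_pos hR0,
          div_self hR0.ne'])
    (fun s => by
      have h1 := (hasDerivAt_toC (hchar.2.2 (τ s)).1).scomp s (hτd s)
      refine h1.congr_deriv ?_
      congr 1
      have h3 : en (V (τ s)) ^ 2 = (V (τ s)).1 ^ 2 + (V (τ s)).2 ^ 2 :=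
        Real.sq_sqrt (by positivity)
      apply Complex.ext <;> simp [toC, vhat, hg, h3])
    (fun s => ((hΦ (τ s)).comp s (hτd s)).const_mul σ)
    (fun s hs => by
      have hE : (-(σ * (σ * Φ (τ s))) : ℝ) = (-Φ (τ s) : ℝ) := by
        rw [← mul_assoc, hσ2, one_mul]
      rw [hE]
      set E := Complex.exp ((-Φ (τ s) : ℝ) * I) with hEdef
      have hRC : (R : ℂ) ≠ 0 := by exact_mod_cast hR0.ne'
      have huC : (u : ℂ) ≠ 0 := by exact_mod_cast hu0.ne'
      have hsplit : (1 / u : ℝ) • ((g (τ s) : ℂ) * toC (V (τ s))) - toC v / R * E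
          = (1 / u : ℝ) • ((g (τ s) : ℂ) * (toC (V (τ s)) - toC v * E)
            + ((g (τ s) - g₀ : ℝ) : ℂ) * (toC v * E)) := by
        have huR : (u : ℂ) = g₀ * R := by rw [hu]; push_cast; rfl
        have hg₀C : (g₀ : ℂ) ≠ 0 := by exact_mod_cast hg₀0.ne'
        rw [real_smul, real_smul]
        push_cast
        rw [huR]
        field_simp
        ring
      rw [hsplit, norm_smul, Real.norm_eq_abs, abs_of_pos (by positivity : 0 < 1 / u),
        one_div_mul_eq_div, div_le_iff₀ hu0]
      refine (norm_add_le _ _).trans (le_trans ?_ hsmall)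
      rw [norm_mul, norm_mul, norm_mul, Complex.norm_real, Complex.norm_real, norm_toC,
        hEdef, norm_exp_ofReal_mul_I, mul_one, Real.norm_eq_abs, Real.norm_eq_abs]
      have h1 := mul_le_mul (hg1 (τ s)) (hVη _ (hτmem' s hs)) (norm_nonneg _) zero_le_one
      have h2 := mul_le_mul (hgg₀ _ (hτmem' s hs)) hvM hR0.le hη0.le
      have h3 : 0 ≤ η * B := by positivity
      linarith)
    (fun s hs => by
      have hsplit : σ * (g (τ s) * 𝔟 (X (τ s)) * (1 / u)) - σ * 𝔟 (X (τ s)) / R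
          = σ * ((g (τ s) - g₀) * 𝔟 (X (τ s))) / u := by
        rw [hu]
        field_simp
      change |_ - σ * 𝔟 (X (τ s)) / R| ≤ ε
      rw [hsplit, abs_div, abs_mul, hσ, one_mul, abs_mul, abs_of_pos hu0, div_le_iff₀ hu0]
      have h1 := mul_le_mul (hgg₀ _ (hτmem' s hs)) (hB (X (τ s))) (abs_nonneg _) hη0.le
      have h3 : 0 ≤ η * (1 + Mb) := by positivity
      linarith)
  refine ⟨τ s, hτmem s hs, ?_⟩
  rw [show r₀ / 2 = 2 * (r₀ / 4) by ring]
  exact hsU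

/-- **Bending lemma for a magnetic field satisfying the bending condition**
(Lemma A.2): all moderately fast trajectories of `v̂⊥𝔟(x) + F` visit the ball
`B(x₀, r₀/2)` robustly under a small perturbing force `F`, and their speeds stay
comparable to the initial speed. The constants `c₀` and `m̲` depend only on
`𝔟, x₀, r₀`, while `T` and `κ` may also depend on `M̄`. -/
theorem bending_general_field
    (x₀ : V2) (r₀ : ℝ) (hr₀ : 0 < r₀)
    (𝔟 : V2 → ℝ) (h𝔟reg : ContDiff ℝ 1 𝔟) (h𝔟per : Zper 𝔟) (h𝔟bend : Bending 𝔟) :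
    ∃ c₀ > (0 : ℝ), ∃ m > (0 : ℝ), ∀ Mb : ℝ, 1 < Mb →
      ∃ T > (0 : ℝ), ∃ κ > (0 : ℝ),
        ∀ c ≥ c₀, ∀ Force : ℝ → V2 → V2 → V2,
          (∀ t, ∃ Lip : NNReal, LipschitzWith Lip fun z : V2 × V2 => Force t z.1 z.2) →
          (∀ t x v, en (Force t x v) ≤ κ) →
          ∀ x v : V2, m ≤ en v → en v ≤ Mb →
          ∀ X V : ℝ → V2,
            IsRelChar c (fun t y w => 𝔟 y • pperp (vhat c w) + Force t y w) 0 x v X V →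
            (∃ t ∈ Set.Ioo (T / 4) (3 * T / 4), X t ∈ ballT2 x₀ (r₀ / 2)) ∧
            (∀ s ∈ Set.Icc (0 : ℝ) T,
              en v / 2 ≤ en (V s) ∧ en (V s) ≤ 2 * en v) := by
  have hbend : ∃ σ : ℝ, |σ| = 1 ∧ BendingOne fun x => σ * 𝔟 x := by
    rcases h𝔟bend with h | h
    · exact ⟨1, abs_one, by simpa using h⟩
    · exact ⟨-1, by simp, by simpa using h⟩
  obtain ⟨σ, hσ, hbend⟩ := hbend
  obtain ⟨c₀, hc₀, m, hm, h⟩ := bending_of_bendingOne x₀ hr₀ h𝔟reg.continuous h𝔟per hσ hbend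
  refine ⟨c₀, hc₀, m, hm, fun Mb hMb => ?_⟩
  obtain ⟨T, hT, κ, hκ, h⟩ := h Mb hMb
  exact ⟨T, hT, κ, hκ, fun c hc Force _ => h c hc Force⟩

end
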